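/- Let N>1 be an integer. Then c(N) = 0 if and only if c(N,n) = 0 for all bad pairs (N,n); in particular, if every pair (N,n) is good then c(N) = 0, and if at least one bad pair exists then c(N) equals the maximum of c(N,n) over all bad pairs (N,n). -/

import Mathlib

namespace Paper

noncomputable section

/-- Closed disk attached to a rational `α = a/b` in lowest terms:
center `α`, radius `1/b`. -/
def disk (α : ℚ) : Set ℂ := Metric.closedBall (α : ℂ) (1 / (α.den : ℝ))

/-- The closed disk `D_{a/b}` of radius `1/b` centered at `a/b`. -/
def diskAt (a b : ℕ) : Set ℂ := Metric.closedBall ((a : ℂ) / (b : ℂ)) (1 / (b : ℝ))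

/-- The north pole `P_α = a/b + i/b` of the disk of `α = a/b` in lowest terms. -/
def northPole (α : ℚ) : ℂ := (α : ℂ) + Complex.I / (α.den : ℂ)

/-- Complexity of the north pole of `α` relative to a set `S` of rationals:
the number of `β ∈ S`, `β ≠ α`, whose disk contains `P_α`. -/
def poleComplexity (S : Set ℚ) (α : ℚ) : ℕ :=
  {β ∈ S | β ≠ α ∧ northPole α ∈ disk β}.ncard

/-- Rationals `a/b ∈ [0,1]` in lowest terms with `N ∣ b`. -/
def cand (N : ℕ) : Set ℚ := {α | 0 ≤ α ∧ α ≤ 1 ∧ N ∣ α.den}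

/-- The region `R_N`. -/
def RN (N : ℕ) : Set ℂ := ⋃ α ∈ cand N, disk α

/-- The set `S_N`: those `α` whose disk is not covered by the other disks. -/
def SSet (N : ℕ) : Set ℚ :=
  {α | α ∈ cand N ∧ ¬ disk α ⊆ ⋃ β ∈ cand N \ {α}, disk β}

/-- The complexity `c(N)`: the maximum of the complexities of north poles of `α ∈ S_N`. -/
def cN (N : ℕ) : ℕ := sSup (poleComplexity (SSet N) '' SSet N)

/-- The least integer `n' > n` with `gcd(N,n') > 1`. -/
def nxt (N n : ℕ) : ℕ := sInf {m | n < m ∧ 1 < Nat.gcd N m}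

/-- Rationals `a/b ∈ [n/N, n'/N]` in lowest terms with `N ∣ b`. -/
def candP (N n : ℕ) : Set ℚ :=
  {α | (n : ℚ) / (N : ℚ) ≤ α ∧ α ≤ (nxt N n : ℚ) / (N : ℚ) ∧ N ∣ α.den}

/-- The region `R_{N,n}` for a pair `(N,n)`. -/
def RP (N n : ℕ) : Set ℂ := ⋃ α ∈ candP N n, disk α

/-- The set `S_{N,n}` for a pair `(N,n)`. -/
def SP (N n : ℕ) : Set ℚ :=
  {α | α ∈ candP N n ∧ ¬ disk α ⊆ ⋃ β ∈ candP N n \ {α}, disk β}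

/-- The complexity `c(N,n)` for a pair `(N,n)`. -/
def cP (N n : ℕ) : ℕ := sSup (poleComplexity (SP N n) '' SP N n)

lemma mem_disk_iff {α : ℚ} {z : ℂ} :
    z ∈ disk α ↔ (z.re - α) ^ 2 + z.im ^ 2 ≤ (1 / (α.den : ℝ)) ^ 2 := by
  have h : dist z (α : ℂ) ^ 2 = (z.re - α) ^ 2 + z.im ^ 2 := by
    rw [Complex.dist_eq, Complex.sq_norm, Complex.normSq_apply]
    simp
    ring
  rw [disk, Metric.mem_closedBall, ← h, pow_le_pow_iff_left₀ dist_nonneg (by positivity) two_ne_zero]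

lemma northPole_re (α : ℚ) : (northPole α).re = α := by
  simp [northPole, Complex.div_re]

lemma northPole_im (α : ℚ) : (northPole α).im = 1 / (α.den : ℝ) := by
  have : (α.den : ℝ) ≠ 0 := by exact_mod_cast α.den_nz
  simp [northPole, Complex.div_im, Complex.normSq_apply]

lemma northPole_mem_disk_iff {α β : ℚ} :
    northPole α ∈ disk β ↔
      ((α : ℝ) - β) ^ 2 + (1 / (α.den : ℝ)) ^ 2 ≤ (1 / (β.den : ℝ)) ^ 2 := by
  rw [mem_disk_iff, northPole_re, northPole_im]

lemma one_div_den_pos (α : ℚ) : 0 < 1 / (α.den : ℝ) :=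
  one_div_pos.2 (by exact_mod_cast α.pos)

lemma abs_re_sub_le_of_mem_disk {α : ℚ} {z : ℂ} (h : z ∈ disk α) :
    |z.re - α| ≤ 1 / (α.den : ℝ) := by
  rw [mem_disk_iff] at h
  exact abs_le_of_sq_le_sq (by nlinarith [sq_nonneg z.im]) (one_div_den_pos α).le

lemma disk_subset_disk {α β : ℚ} (h : 1 / (α.den : ℝ) + |(α : ℝ) - β| ≤ 1 / (β.den : ℝ)) :
    disk α ⊆ disk β := by
  apply Metric.closedBall_subset_closedBall'
  have : dist (α : ℂ) (β : ℂ) = |(α : ℝ) - β| := by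
    rw [← Complex.ofReal_ratCast, ← Complex.ofReal_ratCast, Complex.dist_eq, ← Complex.ofReal_sub,
      Complex.norm_real, Real.norm_eq_abs]
  rwa [this]

lemma eq_of_mem_SSet_of_disk_subset {N : ℕ} {α β : ℚ} (hα : α ∈ SSet N) (hβ : β ∈ cand N)
    (h : disk α ⊆ disk β) : α = β := by
  by_contra hne
  exact hα.2 (h.trans (Set.subset_biUnion_of_mem (u := disk) ⟨hβ, Ne.symm hne⟩))

lemma add_one_div_den_le {N : ℕ} {β : ℚ} (hβ : N ∣ β.den) {m : ℤ}
    (h : (m : ℝ) / N < β) : (m : ℝ) / N + 1 / β.den ≤ β := by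
  obtain ⟨d, hd⟩ := hβ
  have hden := β.pos
  have hN : (0 : ℝ) < N := by
    exact_mod_cast Nat.pos_of_ne_zero (by rintro rfl; simp at hd)
  have hd0 : (0 : ℝ) < d := by
    exact_mod_cast Nat.pos_of_ne_zero (by rintro rfl; simp at hd)
  have e : (m : ℝ) / N = (m * d : ℤ) / (β.den : ℝ) := by
    rw [hd]; push_cast; field_simp
  rw [e, Rat.cast_def] at h ⊢
  have hden' : (0 : ℝ) < β.den := by exact_mod_cast hden
  rw [div_lt_div_iff_of_pos_right hden'] at h
  rw [← add_div, div_le_div_iff_of_pos_right hden']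
  exact_mod_cast Int.add_one_le_of_lt (by exact_mod_cast h)

lemma le_sub_one_div_den {N : ℕ} {β : ℚ} (hβ : N ∣ β.den) {m : ℤ}
    (h : (β : ℝ) < m / N) : β + 1 / β.den ≤ (m : ℝ) / N := by
  have := add_one_div_den_le (N := N) (β := -β) (m := -m) (by simpa using hβ)
    (by push_cast; rw [neg_div]; linarith)
  simp only [Rat.den_neg_eq_den] at this
  push_cast at this
  rw [neg_div] at this
  linarith

lemma natCast_add_one_div_den_le {N : ℕ} {β : ℚ} (hβ : N ∣ β.den) {m : ℕ}
    (h : (m : ℝ) / N < β) : (m : ℝ) / N + 1 / β.den ≤ β := by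
  simpa only [Int.cast_natCast] using
    add_one_div_den_le hβ (m := m) (by simpa only [Int.cast_natCast] using h)

lemma le_natCast_sub_one_div_den {N : ℕ} {β : ℚ} (hβ : N ∣ β.den) {m : ℕ}
    (h : (β : ℝ) < m / N) : β + 1 / β.den ≤ (m : ℝ) / N := by
  simpa only [Int.cast_natCast] using
    le_sub_one_div_den hβ (m := m) (by simpa only [Int.cast_natCast] using h)

lemma ne_div_of_gcd {N : ℕ} {β : ℚ} (hβ : N ∣ β.den) {m : ℕ} (hm : 1 < Nat.gcd N m) :
    (β : ℝ) ≠ m / N := by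
  intro h
  have hN : N ≠ 0 := by
    rintro rfl
    exact β.den_nz (Nat.eq_zero_of_zero_dvd hβ)
  obtain ⟨d, hd⟩ := hβ
  have hd0 : d ≠ 0 := by rintro rfl; simp at hd
  have h1 : β = (m : ℚ) / N := by
    have : ((β : ℚ) : ℝ) = (((m : ℚ) / N : ℚ) : ℝ) := by push_cast; exact h
    exact_mod_cast this
  have h2 : β.num = m * d := by
    have h3 := Rat.mul_den_eq_num β
    rw [hd] at h3
    push_cast at h3
    have : (β.num : ℚ) = m * d := by
      rw [← h3, h1]; field_simp
    exact_mod_cast this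
  have h3 := β.reduced
  rw [h2, hd] at h3
  have h4 : Nat.gcd N m ∣ Nat.gcd ((m : ℤ) * d).natAbs (N * d) := by
    apply Nat.dvd_gcd
    · rw [Int.natAbs_mul]
      simpa using (Nat.gcd_dvd_right N m).mul_right d
    · exact (Nat.gcd_dvd_left N m).mul_right d
  rw [h3] at h4
  have := Nat.le_of_dvd one_pos h4
  omega

lemma exists_rat_of_isCoprime {a d : ℤ} (hd : 0 < d) (h : IsCoprime a d) :
    ∃ β : ℚ, (β.den : ℤ) = d ∧ (β : ℝ) = a / d :=
  ⟨a / d, Rat.den_div_eq_of_coprime hd (Int.isCoprime_iff_gcd_eq_one.1 h), by push_cast; rfl⟩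

lemma exists_tangent_right {N j : ℕ} (hN : 0 < N) (hj : 0 < j) (m : ℤ) :
    ∃ β : ℚ, β.den = N * (j * N) ∧ (β : ℝ) = m / N + 1 / β.den := by
  have hc : IsCoprime (m * j * N + 1 : ℤ) (N * (j * N)) :=
    IsCoprime.mul_right ⟨1, -(m * j), by ring⟩ ⟨1, -m, by ring⟩
  obtain ⟨β, h1, h2⟩ := exists_rat_of_isCoprime (by positivity) hc
  have h3 : β.den = N * (j * N) := by exact_mod_cast h1
  refine ⟨β, h3, ?_⟩
  rw [h2, h3]
  push_cast
  field_simp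

lemma exists_tangent_left {N j : ℕ} (hN : 0 < N) (hj : 0 < j) (m : ℤ) :
    ∃ β : ℚ, β.den = N * (j * N) ∧ (β : ℝ) = m / N - 1 / β.den := by
  obtain ⟨β, h1, h2⟩ := exists_tangent_right hN hj (-m)
  refine ⟨-β, by simpa using h1, ?_⟩
  simp only [Rat.den_neg_eq_den]
  push_cast at h2 ⊢
  rw [h2]
  ring

/-- Among the integers `a + p * t` with `a` and `p` coprime, one with `1 ≤ t ≤ N` is coprime
to `N`. -/
lemma exists_isCoprime_add_mul {N : ℕ} (hN : 0 < N) {a p : ℤ} (h : IsCoprime a p) :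
    ∃ t : ℕ, 0 < t ∧ t ≤ N ∧ IsCoprime (a + p * t) (N : ℤ) := by
  classical
  set F := N.primeFactors.filter (fun l : ℕ => ¬ (l : ℤ) ∣ a) with hF
  have hdvd : ∏ l ∈ F, l ∣ N :=
    (Finset.prod_dvd_prod_of_subset _ _ _ (Finset.filter_subset _ _)).trans
      N.prod_primeFactors_dvd
  refine ⟨∏ l ∈ F, l, Nat.pos_of_dvd_of_pos hdvd hN, Nat.le_of_dvd hN hdvd, ?_⟩
  rw [Int.isCoprime_iff_gcd_eq_one]
  by_contra hne
  obtain ⟨l, hl, hlg⟩ := Nat.exists_prime_and_dvd hne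
  have hl1 : (l : ℤ) ∣ a + p * (∏ l ∈ F, l : ℕ) :=
    (Int.natCast_dvd_natCast.2 hlg).trans (Int.gcd_dvd_left _ _)
  have hl2 : l ∣ N := by
    exact_mod_cast (Int.natCast_dvd_natCast.2 hlg).trans (Int.gcd_dvd_right _ _)
  have hlp : Prime (l : ℤ) := Nat.prime_iff_prime_int.1 hl
  by_cases hla : (l : ℤ) ∣ a
  · rcases hlp.dvd_or_dvd ((dvd_add_right hla).1 hl1) with h' | h'
    · exact hlp.not_isUnit (h.isUnit_of_dvd' hla h')
    · have h'' : l ∣ ∏ l ∈ F, l := by exact_mod_cast h'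
      obtain ⟨k, hk, hlk⟩ := (hl.prime.dvd_finsetProd_iff _).1 h''
      rw [hF, Finset.mem_filter] at hk
      have : l = k := (Nat.prime_dvd_prime_iff_eq hl (Nat.prime_of_mem_primeFactors hk.1)).1 hlk
      exact hk.2 (this ▸ hla)
  · have hmem : l ∈ F := by
      rw [hF, Finset.mem_filter, Nat.mem_primeFactors]
      exact ⟨⟨hl, hl2, hN.ne'⟩, hla⟩
    have h' : (l : ℤ) ∣ (∏ l ∈ F, l : ℕ) :=
      Int.natCast_dvd_natCast.2 (Finset.dvd_prod_of_mem _ hmem)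
    exact hla ((dvd_add_left (h'.mul_left p)).1 hl1)

lemma exists_abs_mul_sub_lt_one {N : ℕ} (hN : 0 < N) {y : ℝ} (hy : ∀ m : ℤ, y ≠ m) :
    ∃ a d : ℤ, 0 < d ∧ IsCoprime a (N * d) ∧ |d * y - a| < 1 := by
  have hr : 0 < |y - round y| := abs_pos.2 (sub_ne_zero.2 (hy _))
  obtain ⟨M₀, hM₀⟩ := exists_nat_one_div_lt hr
  obtain ⟨x, hx, -⟩ := Real.exists_rat_abs_sub_le_and_den_le y (n := M₀ + 2 * N + 2) (by omega)
  have hx2 : 2 ≤ x.den := by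
    by_contra hlt
    have h1 : x.den = 1 := by have := x.pos; omega
    have h2 : (x : ℝ) = x.num := by rw [Rat.cast_def, h1]; simp
    rw [h1, h2] at hx
    have h3 := round_le y x.num
    have h4 : 1 / (((M₀ + 2 * N + 2 : ℕ) + 1 : ℝ) * (1 : ℕ)) ≤ 1 / ((M₀ : ℝ) + 1) := by
      apply one_div_le_one_div_of_le (by positivity)
      push_cast
      have : (0 : ℝ) ≤ N := by positivity
      linarith
    linarith
  obtain ⟨u, v, huv⟩ : IsCoprime x.num (x.den : ℤ) := Int.isCoprime_iff_gcd_eq_one.2 x.reduced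
  have hq : (0 : ℤ) < x.den := by exact_mod_cast x.pos
  set q : ℤ := (x.den : ℤ) with hqdef
  set p : ℤ := x.num with hpdef
  obtain ⟨a₀, ha₀⟩ : ∃ a₀, p * (u % q) - q * a₀ = 1 :=
    ⟨-(v + p * (u / q)), by
      have := Int.emod_add_mul_ediv u q
      linear_combination huv + p * this⟩
  obtain ⟨t, ht0, htN, ht⟩ := exists_isCoprime_add_mul hN (a := a₀) (p := p)
    ⟨-q, u % q, by linear_combination ha₀⟩
  have hu0 := Int.emod_nonneg u hq.ne'
  have huq := Int.emod_lt_of_pos u hq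
  have ht0' : (0 : ℤ) < t := by exact_mod_cast ht0
  have htN' : (t : ℤ) ≤ N := by exact_mod_cast htN
  refine ⟨a₀ + p * t, u % q + q * t, by positivity, ?_, ?_⟩
  · refine ht.mul_right ⟨-q, p, by linear_combination ha₀⟩
  have hqR : (2 : ℝ) ≤ q := by rw [hqdef]; exact_mod_cast hx2
  have hdle : ((u % q + q * t : ℤ) : ℝ) ≤ q * (N + 1) := by
    have : u % q + q * t ≤ q * (N + 1) := by nlinarith
    exact_mod_cast this
  have hd0 : (0 : ℝ) ≤ (u % q + q * t : ℤ) := by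
    have : 0 ≤ u % q + q * t := by positivity
    exact_mod_cast this
  have hxpq : (x : ℝ) = p / q := by rw [Rat.cast_def]; simp [hpdef, hqdef]
  have ha₀R : (p : ℝ) * (u % q : ℤ) - q * a₀ = 1 := by exact_mod_cast ha₀
  have key : (u % q + q * t : ℤ) * y - (a₀ + p * t : ℤ) =
      (u % q + q * t : ℤ) * (y - x) + 1 / q := by
    rw [hxpq]
    push_cast
    have : (q : ℝ) ≠ 0 := by linarith
    field_simp
    linear_combination ha₀R
  rw [key]
  have hb : (u % q + q * t : ℤ) * |y - x| ≤ (N + 1) / (2 * N + 3) := by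
    have hx' : |y - x| ≤ 1 / ((2 * N + 3) * q) := by
      refine hx.trans (one_div_le_one_div_of_le (by positivity) ?_)
      have : (x.den : ℝ) = q := by simp [hqdef]
      rw [this]
      push_cast
      have : (0 : ℝ) ≤ M₀ := by positivity
      have : (2 * N + 3 : ℝ) ≤ M₀ + 2 * N + 2 + 1 := by linarith
      gcongr
    calc (u % q + q * t : ℤ) * |y - x| ≤ (q * (N + 1)) * (1 / ((2 * N + 3) * q)) :=
          mul_le_mul hdle hx' (abs_nonneg _) (by positivity)
      _ = (N + 1) / (2 * N + 3) := by
          have : (q : ℝ) ≠ 0 := by linarith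
          field_simp
  have hhalf : ((N : ℝ) + 1) / (2 * N + 3) < 1 / 2 := by
    rw [div_lt_div_iff₀ (by positivity) (by positivity)]
    linarith
  have hq2 : (1 : ℝ) / q ≤ 1 / 2 := one_div_le_one_div_of_le (by positivity) hqR
  calc _ ≤ |(u % q + q * t : ℤ) * (y - x)| + |(1 : ℝ) / q| := abs_add_le _ _
    _ = (u % q + q * t : ℤ) * |y - x| + 1 / q := by
        rw [abs_mul, abs_of_nonneg hd0, abs_of_nonneg (a := (1 : ℝ) / q) (by positivity)]
    _ < 1 := by linarith

/-- A point of `[0, 1]` that is not of the form `m / N` with `gcd(N, m) > 1` lies in the interior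
of one of the disks. -/
lemma exists_cand_abs_sub_lt {N : ℕ} (hN : 0 < N) {x : ℝ} (hx0 : 0 ≤ x) (hx1 : x ≤ 1)
    (hx : ∀ m : ℕ, 1 < Nat.gcd N m → x ≠ m / N) :
    ∃ β ∈ cand N, |x - β| < 1 / (β.den : ℝ) := by
  have hNR : (0 : ℝ) < N := by exact_mod_cast hN
  obtain ⟨a, d, hd, hc, h⟩ : ∃ a d : ℤ, 0 < d ∧ IsCoprime a (N * d) ∧ |d * (N * x) - a| < 1 := by
    by_cases hy : ∀ m : ℤ, N * x ≠ m
    · exact exists_abs_mul_sub_lt_one hN hy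
    push Not at hy
    obtain ⟨m, hm⟩ := hy
    have hm0 : 0 ≤ m := by
      have : (0 : ℝ) ≤ m := hm ▸ by positivity
      exact_mod_cast this
    lift m to ℕ using hm0
    refine ⟨m, 1, one_pos, ?_, by simp [hm]⟩
    have h1 : ¬ 1 < Nat.gcd N m := fun h1 => hx m h1 (by
      rw [eq_div_iff hNR.ne', mul_comm, hm]; simp)
    have h2 : Nat.gcd N m = 1 := by
      have := Nat.gcd_pos_of_pos_left m hN
      omega
    rw [mul_one, Nat.isCoprime_iff_coprime]
    exact Nat.Coprime.symm h2
  obtain ⟨β, h1, h2⟩ := exists_rat_of_isCoprime (by positivity) hc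
  have hdR : (0 : ℝ) < d := by exact_mod_cast hd
  have h1R : (β.den : ℝ) = N * d := by exact_mod_cast congrArg (Int.cast : ℤ → ℝ) h1
  rw [abs_lt] at h
  have ha0 : 0 ≤ a := by
    by_contra hneg
    have : a + 1 ≤ 0 := by omega
    have : (a : ℝ) + 1 ≤ 0 := by exact_mod_cast this
    have : 0 ≤ d * (N * x) := by positivity
    linarith
  have ha1 : a ≤ N * d := by
    by_contra hlt
    have : (N : ℤ) * d + 1 ≤ a := by omega
    have : (N : ℝ) * d + 1 ≤ a := by exact_mod_cast this
    have : d * (N * x) ≤ d * (N * 1) := by gcongr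
    linarith
  push_cast at h2
  refine ⟨β, ⟨?_, ?_, ?_⟩, ?_⟩
  · have : (0 : ℝ) ≤ β := by rw [h2]; positivity
    exact_mod_cast this
  · have : (β : ℝ) ≤ 1 := by
      rw [h2, div_le_one (by positivity)]
      exact_mod_cast ha1
    exact_mod_cast this
  · exact Int.natCast_dvd_natCast.1 ⟨d, h1⟩
  · have : x - β = (d * (N * x) - a) / (N * d) := by rw [h2]; field_simp
    rw [this, h1R, abs_div, abs_of_pos (a := (N : ℝ) * d) (by positivity)]
    gcongr
    exact abs_lt.2 h

lemma exists_local_den_bound {N : ℕ} (hN : 0 < N) {x : ℝ} (hx0 : 0 ≤ x) (hx1 : x ≤ 1) :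
    ∃ δ > 0, ∃ K : ℕ, ∀ β ∈ SSet N, |x - β| < δ → β.den ≤ K := by
  have hNR : (0 : ℝ) < N := by exact_mod_cast hN
  by_cases hx : ∀ m : ℕ, 1 < Nat.gcd N m → x ≠ m / N
  · obtain ⟨c, hc, hxc⟩ := exists_cand_abs_sub_lt hN hx0 hx1 hx
    set δ := (1 / (c.den : ℝ) - |x - c|) / 2 with hδ
    have hδ0 : 0 < δ := by rw [hδ]; linarith
    obtain ⟨k, hk⟩ := exists_nat_gt (1 / δ)
    refine ⟨δ, hδ0, max k c.den, fun β hβ hxβ => ?_⟩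
    by_contra! hlt
    rw [max_lt_iff] at hlt
    have hkβ : (k : ℝ) < β.den := by exact_mod_cast hlt.1
    have h1 : 1 / (β.den : ℝ) < δ := by
      rw [div_lt_comm₀ (by exact_mod_cast β.pos) hδ0]
      linarith
    have h2 : |(β : ℝ) - c| ≤ |x - β| + |x - c| := by
      rw [abs_sub_comm x β]
      exact abs_sub_le _ _ _
    have := eq_of_mem_SSet_of_disk_subset hβ hc (disk_subset_disk (by linarith))
    rw [this] at hlt
    omega
  · push Not at hx
    obtain ⟨m, hm, rfl⟩ := hx
    refine ⟨1 / (N * (1 * N) : ℕ), by positivity, N * (1 * N), fun β hβ hxβ => ?_⟩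
    obtain ⟨⟨hβ0, hβ1, hβN⟩, -⟩ := id hβ
    have hβ0' : (0 : ℝ) ≤ β := by exact_mod_cast hβ0
    have hβ1' : (β : ℝ) ≤ 1 := by exact_mod_cast hβ1
    rw [abs_lt] at hxβ
    have hle : (1 : ℝ) / (N * (1 * N) : ℕ) ≤ 1 / N := by
      apply one_div_le_one_div_of_le hNR
      exact_mod_cast Nat.le_mul_of_pos_right N (by omega)
    rcases lt_or_gt_of_ne (ne_div_of_gcd hβN hm) with h | h
    · obtain ⟨c, hc, hc'⟩ := exists_tangent_left hN one_pos m
      have h1 := le_natCast_sub_one_div_den hβN h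
      rw [hc] at hc'
      push_cast at h1 hc' hxβ hle
      have hm1 : (1 : ℝ) / N ≤ m / N := by
        have : 0 < m := by
          rcases Nat.eq_zero_or_pos m with rfl | h'
          · simp at h; linarith
          · exact h'
        gcongr
        exact_mod_cast this
      have hcN : c ∈ cand N := by
        refine ⟨?_, ?_, hc ▸ dvd_mul_right _ _⟩
        · have : (0 : ℝ) ≤ c := by linarith
          exact_mod_cast this
        · have : (c : ℝ) ≤ 1 := by
            have : (0 : ℝ) ≤ 1 / (N * (1 * N)) := by positivity
            linarith
          exact_mod_cast this
      have := eq_of_mem_SSet_of_disk_subset hβ hcN (disk_subset_disk (by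
        rw [hc, abs_of_nonneg (by linarith)]
        push_cast
        linarith))
      rw [this, hc]
    · obtain ⟨c, hc, hc'⟩ := exists_tangent_right hN one_pos m
      have h1 := natCast_add_one_div_den_le hβN h
      rw [hc] at hc'
      push_cast at h1 hc' hxβ hle
      have hm1 : (m : ℝ) / N + 1 / N ≤ 1 := by
        have h2 : (m : ℝ) < N := by
          rw [div_lt_iff₀ hNR] at h
          nlinarith
        have h3 : m + 1 ≤ N := by exact_mod_cast h2
        rw [← add_div, div_le_one hNR]
        exact_mod_cast h3
      have hcN : c ∈ cand N := by
        refine ⟨?_, ?_, hc ▸ dvd_mul_right _ _⟩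
        · have : (0 : ℝ) ≤ c := by rw [hc']; positivity
          exact_mod_cast this
        · have : (c : ℝ) ≤ 1 := by linarith
          exact_mod_cast this
      have := eq_of_mem_SSet_of_disk_subset hβ hcN (disk_subset_disk (by
        rw [hc, abs_of_nonpos (by linarith)]
        push_cast
        linarith))
      rw [this, hc]

lemma SSet_finite {N : ℕ} (hN : 0 < N) : (SSet N).Finite := by
  have hb : ∃ K : ℕ, ∀ β ∈ SSet N, (β : ℝ) ∈ Set.Icc (0 : ℝ) 1 → β.den ≤ K := by
    refine isCompact_Icc.induction_on
      (p := fun s : Set ℝ => ∃ K : ℕ, ∀ β ∈ SSet N, (β : ℝ) ∈ s → β.den ≤ K) ⟨0, by simp⟩ ?_ ?_ ?_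
    · rintro s t hst ⟨K, hK⟩
      exact ⟨K, fun β hβ h => hK β hβ (hst h)⟩
    · rintro s t ⟨K, hK⟩ ⟨L, hL⟩
      refine ⟨max K L, fun β hβ h => ?_⟩
      rcases h with h | h
      · exact le_max_of_le_left (hK β hβ h)
      · exact le_max_of_le_right (hL β hβ h)
    · rintro x ⟨hx0, hx1⟩
      obtain ⟨δ, hδ, K, hK⟩ := exists_local_den_bound hN hx0 hx1
      refine ⟨Metric.ball x δ, mem_nhdsWithin_of_mem_nhds (Metric.ball_mem_nhds x hδ), K,
        fun β hβ h => hK β hβ ?_⟩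
      rwa [Metric.mem_ball', Real.dist_eq] at h
  obtain ⟨K, hK⟩ := hb
  have hf : (Set.Icc (0 : ℤ) K ×ˢ Set.Icc 0 K).Finite :=
    (Set.finite_Icc _ _).prod (Set.finite_Icc _ _)
  refine (hf.image fun q : ℤ × ℕ => (q.1 / q.2 : ℚ)).subset ?_
  intro β hβ
  obtain ⟨⟨h0, h1, -⟩, -⟩ := id hβ
  have hd := hK β hβ ⟨by exact_mod_cast h0, by exact_mod_cast h1⟩
  refine ⟨(β.num, β.den), ⟨⟨Rat.num_nonneg.2 h0, ?_⟩, Nat.zero_le _, hd⟩, Rat.num_div_den β⟩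
  have : β.num ≤ β.den := Rat.num_le_denom_iff.2 h1
  exact this.trans (by exact_mod_cast hd)

/-- No disk of another rational contains the north pole of `α` when its denominator is `N`. -/
lemma poleComplexity_SSet_of_den_eq {N : ℕ} {α : ℚ} (hα : α.den = N) :
    poleComplexity (SSet N) α = 0 := by
  have : {β ∈ SSet N | β ≠ α ∧ northPole α ∈ disk β} = ∅ := by
    rw [Set.eq_empty_iff_forall_notMem]
    rintro β ⟨hβ, hne, h⟩
    rw [northPole_mem_disk_iff, hα] at h
    have hN : (0 : ℝ) < N := by rw [← hα]; exact_mod_cast α.pos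
    have hle : 1 / (β.den : ℝ) ≤ 1 / N :=
      one_div_le_one_div_of_le hN (by exact_mod_cast Nat.le_of_dvd β.pos hβ.1.2.2)
    have hsq : (1 / (β.den : ℝ)) ^ 2 ≤ (1 / (N : ℝ)) ^ 2 :=
      pow_le_pow_left₀ (one_div_den_pos β).le hle 2
    have h0 : ((α : ℝ) - β) ^ 2 = 0 := le_antisymm (by linarith) (sq_nonneg _)
    have h1 : (α : ℝ) = β := sub_eq_zero.1 (pow_eq_zero_iff two_ne_zero |>.1 h0)
    exact hne (by exact_mod_cast h1.symm)
  rw [poleComplexity, this, Set.ncard_empty]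

/-- The disk of the fraction `k / N`, with `k` coprime to `N`, contains all the disks with center
in `((k - 1) / N, (k + 1) / N)`, so no other rational there belongs to `SSet N`. -/
lemma den_eq_of_abs_sub_lt {N k : ℕ} (hN : 0 < N) (hk : Nat.gcd N k = 1) (hkN : k ≤ N) {α : ℚ}
    (hα : α ∈ SSet N) (h : |(α : ℝ) - k / N| < 1 / N) : α.den = N := by
  have hNR : (0 : ℝ) < N := by exact_mod_cast hN
  obtain ⟨c, hc, hc'⟩ := exists_rat_of_isCoprime (a := k) (d := N) (by exact_mod_cast hN)
    (Nat.isCoprime_iff_coprime.2 (Nat.Coprime.symm hk))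
  have hc : c.den = N := by exact_mod_cast hc
  push_cast at hc'
  have hcN : c ∈ cand N := by
    refine ⟨?_, ?_, hc ▸ dvd_rfl⟩
    · have : (0 : ℝ) ≤ c := by rw [hc']; positivity
      exact_mod_cast this
    · have : (c : ℝ) ≤ 1 := by
        rw [hc', div_le_one hNR]
        exact_mod_cast hkN
      exact_mod_cast this
  have hαN := hα.1.2.2
  rw [abs_lt] at h
  have h1 := add_one_div_den_le hαN (m := k - 1) (by push_cast; rw [sub_div]; linarith)
  have h2 := le_sub_one_div_den hαN (m := k + 1) (by push_cast; rw [add_div]; linarith)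
  push_cast at h1 h2
  rw [sub_div] at h1
  rw [add_div] at h2
  have hle : |(α : ℝ) - k / N| ≤ 1 / N - 1 / α.den := abs_le.2 ⟨by linarith, by linarith⟩
  rw [eq_of_mem_SSet_of_disk_subset hα hcN (disk_subset_disk (by rw [hc', hc]; linarith)), hc]

lemma nxt_eq {N n : ℕ} (h : 1 < Nat.gcd N (n + 1)) : nxt N n = n + 1 :=
  le_antisymm (Nat.sInf_le ⟨Nat.lt_succ_self n, h⟩)
    (le_csInf ⟨n + 1, Nat.lt_succ_self n, h⟩ fun _ hm => hm.1)

lemma mem_candP_iff {N n : ℕ} (h : 1 < Nat.gcd N (n + 1)) {α : ℚ} :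
    α ∈ candP N n ↔ (n : ℝ) / N ≤ α ∧ (α : ℝ) ≤ (n + 1 : ℕ) / N ∧ N ∣ α.den := by
  have h1 (m : ℕ) : (m : ℝ) / N = ((m / N : ℚ) : ℝ) := by push_cast; rfl
  rw [h1, h1, Rat.cast_le, Rat.cast_le]
  simp only [candP, nxt_eq h, Set.mem_ofPred_eq]

lemma candP_subset_cand {N n : ℕ} (hn : n + 1 ≤ N) (h : 1 < Nat.gcd N (n + 1)) :
    candP N n ⊆ cand N := by
  intro α hα
  rw [mem_candP_iff h] at hα
  obtain ⟨h1, h2, h3⟩ := hα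
  refine ⟨?_, ?_, h3⟩
  · have : (0 : ℝ) ≤ α := le_trans (by positivity) h1
    exact_mod_cast this
  · have : (α : ℝ) ≤ 1 := h2.trans (div_le_one_of_le₀ (by exact_mod_cast hn) (by positivity))
    exact_mod_cast this

lemma candP_disk_bounds {N n : ℕ} (h₀ : 1 < Nat.gcd N n) (h₁ : 1 < Nat.gcd N (n + 1)) {α : ℚ}
    (hα : α ∈ candP N n) :
    (n : ℝ) / N + 1 / α.den ≤ α ∧ (α : ℝ) + 1 / α.den ≤ (n + 1 : ℕ) / N := by
  obtain ⟨h1, h2, h3⟩ := (mem_candP_iff h₁).1 hα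
  exact ⟨natCast_add_one_div_den_le h3 (lt_of_le_of_ne h1 (ne_div_of_gcd h3 h₀).symm),
    le_natCast_sub_one_div_den h3 (lt_of_le_of_ne h2 (ne_div_of_gcd h3 h₁))⟩

/-- Disks with centers inside and outside a bad strip meet at most at the two real points of the
boundary of the strip. -/
lemma im_eq_zero_of_mem_disk_of_mem_disk {N n : ℕ} (h₀ : 1 < Nat.gcd N n)
    (h₁ : 1 < Nat.gcd N (n + 1)) {α β : ℚ} (hα : α ∈ candP N n) (hβ : N ∣ β.den)
    (hβ' : β ∉ candP N n) {z : ℂ} (hzα : z ∈ disk α) (hzβ : z ∈ disk β) :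
    z.im = 0 ∧ (z.re = n / N ∨ z.re = (n + 1 : ℕ) / N) := by
  obtain ⟨h1, h2⟩ := candP_disk_bounds h₀ h₁ hα
  rw [mem_candP_iff h₁] at hβ'
  have ha := abs_le.1 (abs_re_sub_le_of_mem_disk hzα)
  have hb := abs_le.1 (abs_re_sub_le_of_mem_disk hzβ)
  rw [mem_disk_iff] at hzβ
  have hpos := one_div_den_pos β
  have him (h : (1 / (β.den : ℝ)) ^ 2 ≤ (z.re - β) ^ 2) : z.im = 0 := by
    have : z.im ^ 2 = 0 := le_antisymm (by linarith) (sq_nonneg _)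
    exact pow_eq_zero_iff two_ne_zero |>.1 this
  by_cases hlt : (β : ℝ) < n / N
  · have h3 := le_natCast_sub_one_div_den hβ hlt
    exact ⟨him (pow_le_pow_left₀ hpos.le (by linarith) 2), Or.inl (by linarith)⟩
  · have hgt : ((n + 1 : ℕ) : ℝ) / N < β := by
      by_contra hgt
      exact hβ' ⟨not_lt.1 hlt, not_lt.1 hgt, hβ⟩
    have h3 := natCast_add_one_div_den_le hβ hgt
    refine ⟨him ?_, Or.inr (by linarith)⟩
    rw [← neg_sq (z.re - β)]
    exact pow_le_pow_left₀ hpos.le (by linarith) 2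

/-- Each boundary point of a bad strip lies on the disks of several rationals of the strip. -/
lemma exists_ne_mem_candP {N n : ℕ} (hN : 0 < N)
    (h₁ : 1 < Nat.gcd N (n + 1)) (α : ℚ) {z : ℂ} (hz : z.im = 0)
    (hz' : z.re = n / N ∨ z.re = (n + 1 : ℕ) / N) :
    ∃ β ∈ candP N n, β ≠ α ∧ z ∈ disk β := by
  have hNR : (0 : ℝ) < N := by exact_mod_cast hN
  obtain ⟨j, hj, hne⟩ : ∃ j, 0 < j ∧ N * (j * N) ≠ α.den := by
    by_cases h : N * (1 * N) = α.den
    · refine ⟨2, two_pos, ?_⟩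
      rw [← h]
      have : 0 < N * N := by positivity
      nlinarith
    · exact ⟨1, one_pos, h⟩
  have key (β : ℚ) (h : β.den = N * (j * N)) : 0 < 1 / (β.den : ℝ) ∧ 1 / (β.den : ℝ) ≤ 1 / N := by
    refine ⟨one_div_den_pos β, one_div_le_one_div_of_le hNR ?_⟩
    rw [h]
    exact_mod_cast Nat.le_mul_of_pos_right N (by positivity)
  have hsum : ((n + 1 : ℕ) : ℝ) / N = n / N + 1 / N := by push_cast; rw [add_div]
  rcases hz' with hz' | hz'
  · obtain ⟨β, h1, h2⟩ := exists_tangent_right hN hj n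
    obtain ⟨h3, h4⟩ := key β h1
    rw [Int.cast_natCast] at h2
    refine ⟨β, (mem_candP_iff h₁).2 ⟨by linarith, by linarith, h1 ▸ dvd_mul_right _ _⟩, ?_, ?_⟩
    · rintro rfl
      exact hne h1.symm
    · rw [mem_disk_iff, hz, hz']
      nlinarith
  · obtain ⟨β, h1, h2⟩ := exists_tangent_left hN hj (n + 1 : ℕ)
    obtain ⟨h3, h4⟩ := key β h1
    rw [Int.cast_natCast] at h2
    refine ⟨β, (mem_candP_iff h₁).2 ⟨by linarith, by linarith, h1 ▸ dvd_mul_right _ _⟩, ?_, ?_⟩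
    · rintro rfl
      exact hne h1.symm
    · rw [mem_disk_iff, hz, hz']
      nlinarith

lemma SP_eq {N n : ℕ} (hn : n + 1 ≤ N) (h₀ : 1 < Nat.gcd N n) (h₁ : 1 < Nat.gcd N (n + 1)) :
    SP N n = SSet N ∩ candP N n := by
  have hsub := candP_subset_cand hn h₁
  ext α
  constructor
  · rintro ⟨hα, hcov⟩
    refine ⟨⟨hsub hα, fun hall => hcov fun z hz => ?_⟩, hα⟩
    obtain ⟨β, ⟨hβ, hne⟩, hzβ⟩ := Set.mem_iUnion₂.1 (hall hz)
    by_cases hβ' : β ∈ candP N n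
    · exact Set.mem_iUnion₂.2 ⟨β, ⟨hβ', hne⟩, hzβ⟩
    · obtain ⟨h1, h2⟩ := im_eq_zero_of_mem_disk_of_mem_disk h₀ h₁ hα hβ.2.2 hβ' hz hzβ
      obtain ⟨γ, hγ, hγα, hzγ⟩ := exists_ne_mem_candP (by omega) h₁ α h1 h2
      exact Set.mem_iUnion₂.2 ⟨γ, ⟨hγ, hγα⟩, hzγ⟩
  · rintro ⟨⟨-, hcov⟩, hα⟩
    exact ⟨hα, fun hall => hcov (hall.trans
      (Set.biUnion_subset_biUnion_left (Set.sdiff_subset_sdiff_left hsub)))⟩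

lemma poleComplexity_SP {N n : ℕ} (hn : n + 1 ≤ N) (h₀ : 1 < Nat.gcd N n)
    (h₁ : 1 < Nat.gcd N (n + 1)) {α : ℚ} (hα : α ∈ candP N n) :
    poleComplexity (SP N n) α = poleComplexity (SSet N) α := by
  rw [poleComplexity, poleComplexity, SP_eq hn h₀ h₁]
  congr 1
  ext β
  refine ⟨fun h => ⟨h.1.1, h.2⟩, fun h => ⟨⟨h.1, ?_⟩, h.2⟩⟩
  by_contra hβ
  have hself : northPole α ∈ disk α := by rw [northPole_mem_disk_iff]; simp
  have := (im_eq_zero_of_mem_disk_of_mem_disk h₀ h₁ hα h.1.1.2.2 hβ hself h.2.2).1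
  rw [northPole_im] at this
  exact (one_div_den_pos α).ne' this

lemma poleComplexity_eq_zero_or_mem_candP {N : ℕ} (hN : 0 < N) {α : ℚ} (hα : α ∈ SSet N) :
    poleComplexity (SSet N) α = 0 ∨
      ∃ n, n + 1 ≤ N ∧ 1 < Nat.gcd N n ∧ 1 < Nat.gcd N (n + 1) ∧ α ∈ candP N n := by
  have hNR : (0 : ℝ) < N := by exact_mod_cast hN
  have h0 : (0 : ℝ) ≤ α := by exact_mod_cast hα.1.1
  have h1 : (α : ℝ) ≤ 1 := by exact_mod_cast hα.1.2.1
  set k := ⌊(α : ℝ) * N⌋₊ with hk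
  have hk1 : (k : ℝ) / N ≤ α := by
    rw [div_le_iff₀ hNR]
    exact Nat.floor_le (by positivity)
  have hk2 : (α : ℝ) < (k + 1 : ℕ) / N := by
    rw [lt_div_iff₀ hNR]
    push_cast
    exact Nat.lt_floor_add_one _
  have hkN : k ≤ N := by
    have : (k : ℝ) ≤ N := by
      rw [div_le_iff₀ hNR] at hk1
      nlinarith
    exact_mod_cast this
  have hsum : ((k + 1 : ℕ) : ℝ) / N = k / N + 1 / N := by push_cast; rw [add_div]
  by_cases hg : Nat.gcd N k = 1
  · exact Or.inl (poleComplexity_SSet_of_den_eq (den_eq_of_abs_sub_lt hN hg hkN hα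
      (abs_lt.2 ⟨by have := one_div_pos.2 hNR; linarith, by linarith⟩)))
  have hg : 1 < Nat.gcd N k := by
    have := Nat.gcd_pos_of_pos_left k hN
    omega
  have hne := ne_div_of_gcd hα.1.2.2 hg
  have hkN' : k + 1 ≤ N := by
    by_contra hlt
    have : k = N := by omega
    rw [this, div_self hNR.ne'] at hk1 hne
    exact hne (le_antisymm h1 hk1)
  by_cases hg' : Nat.gcd N (k + 1) = 1
  · have := lt_of_le_of_ne hk1 hne.symm
    exact Or.inl (poleComplexity_SSet_of_den_eq (den_eq_of_abs_sub_lt hN hg' hkN' hα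
      (abs_lt.2 ⟨by linarith, by have := one_div_pos.2 hNR; linarith⟩)))
  have hg' : 1 < Nat.gcd N (k + 1) := by
    have := Nat.gcd_pos_of_pos_left (k + 1) hN
    omega
  exact Or.inr ⟨k, hkN', hg, hg', (mem_candP_iff hg').2 ⟨hk1, hk2.le, hα.1.2.2⟩⟩

lemma cN_eq_sSup {N : ℕ} (hN : 1 < N) :
    cN N = sSup (cP N '' {n | n ≤ N - 1 ∧ 1 < Nat.gcd N n ∧ 1 < Nat.gcd N (n + 1)}) := by
  have hfin := SSet_finite (N := N) (by omega)
  have hT : {n | n ≤ N - 1 ∧ 1 < Nat.gcd N n ∧ 1 < Nat.gcd N (n + 1)}.Finite :=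
    (Set.finite_Iic (N - 1)).subset fun n hn => hn.1
  apply le_antisymm
  · refine csSup_le' ?_
    rintro _ ⟨α, hα, rfl⟩
    rcases poleComplexity_eq_zero_or_mem_candP (by omega) hα with h | ⟨n, hn, h₀, h₁, hαn⟩
    · rw [h]
      exact Nat.zero_le _
    · rw [← poleComplexity_SP hn h₀ h₁ hαn]
      have hSP := SP_eq hn h₀ h₁
      have hmem : α ∈ SP N n := hSP ▸ ⟨hα, hαn⟩
      have hfinP : (SP N n).Finite := hfin.subset (hSP ▸ Set.inter_subset_left)
      exact (le_csSup (hfinP.image _).bddAbove ⟨α, hmem, rfl⟩).trans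
        (le_csSup (hT.image _).bddAbove ⟨n, ⟨by omega, h₀, h₁⟩, rfl⟩)
  · refine csSup_le' ?_
    rintro _ ⟨n, ⟨hn, h₀, h₁⟩, rfl⟩
    refine csSup_le' ?_
    rintro _ ⟨α, hα, rfl⟩
    have hn : n + 1 ≤ N := by omega
    rw [poleComplexity_SP hn h₀ h₁ hα.1]
    rw [SP_eq hn h₀ h₁] at hα
    exact le_csSup (hfin.image _).bddAbove ⟨α, hα.1, rfl⟩

/-- `c(N) = 0` iff `c(N,n) = 0` for all bad pairs `(N,n)`; if all pairs are good
then `c(N) = 0`, and if some bad pair exists then `c(N)` is the maximum of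
`c(N,n)` over the bad pairs. -/
theorem cN_determined_by_bad_pairs (N : ℕ) (hN : 1 < N) :
    (cN N = 0 ↔ ∀ n, n ≤ N - 1 → 1 < Nat.gcd N n → 1 < Nat.gcd N (n + 1) → cP N n = 0) ∧
    ((∀ n, n ≤ N - 1 → 1 < Nat.gcd N n → Nat.gcd N (n + 1) = 1) → cN N = 0) ∧
    ((∃ n, n ≤ N - 1 ∧ 1 < Nat.gcd N n ∧ 1 < Nat.gcd N (n + 1)) →
      cN N = sSup (cP N '' {n | n ≤ N - 1 ∧ 1 < Nat.gcd N n ∧ 1 < Nat.gcd N (n + 1)})) := by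
  have hc := cN_eq_sSup hN
  have hzero : cN N = 0 ↔
      ∀ n, n ≤ N - 1 → 1 < Nat.gcd N n → 1 < Nat.gcd N (n + 1) → cP N n = 0 := by
    have hT : {n | n ≤ N - 1 ∧ 1 < Nat.gcd N n ∧ 1 < Nat.gcd N (n + 1)}.Finite :=
      (Set.finite_Iic (N - 1)).subset fun n hn => hn.1
    rw [hc]
    constructor
    · intro h n hn h₀ h₁
      exact Nat.le_zero.1 (h ▸ le_csSup (hT.image _).bddAbove ⟨n, ⟨hn, h₀, h₁⟩, rfl⟩)
    · intro h
      refine Nat.le_zero.1 (csSup_le' ?_)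
      rintro _ ⟨n, ⟨hn, h₀, h₁⟩, rfl⟩
      exact (h n hn h₀ h₁).le
  refine ⟨hzero, fun h => hzero.2 fun n hn h₀ h₁ => ?_, fun _ => hc⟩
  have := h n hn h₀
  omega

end

end Paper
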